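/- arXiv:1607.02563 — 3 statements merged into one kernel-verified Lean document; each statement's English description precedes it below -/
import Mathlib

section
/- Let B be a real separable Banach space, (Ω, 𝓕, ℙ) a probability space, and X : B × Ω → B jointly measurable; write X^x := X(x,·). Assume the probability measure μ on B is invariant for the Markov operator P f(x) := E[f(X^x)], i.e. ∫_B P f dμ = ∫_B f dμ for all bounded measurable f. Fix k ∈ B and suppose there is a jointly measurable family M : B × Ω → ℝ with ∫_B E[M_x²] μ(dx) < ∞ such that E[(∂_k f)(X^x)] = E[f(X^x) M_x] for every f ∈ C_b²(B) and μ-a.e. x ∈ B. Then for all f, g ∈ C_b²(B): ℰ_k(f,g) = ∫_B E[ (f·∂_k g)(X^x) · M_x ] μ(dx) − ∫_B f · ∂_k² g dμ. -/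
open MeasureTheory Filter

/-- `f ∈ C_b²(B)`: `f` is twice continuously Fréchet differentiable, bounded, with bounded
first and second Fréchet derivatives. -/
def IsCb2 {B : Type*} [NormedAddCommGroup B] [NormedSpace ℝ B] (f : B → ℝ) : Prop :=
  ContDiff ℝ 2 f ∧ (∃ c, ∀ x, |f x| ≤ c) ∧ (∃ c, ∀ x, ‖fderiv ℝ f x‖ ≤ c) ∧
    (∃ c, ∀ x, ‖fderiv ℝ (fderiv ℝ f) x‖ ≤ c)

theorem aux_norm {B F : Type*} [NormedAddCommGroup B] [NormedSpace ℝ B]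
    [NormedAddCommGroup F] [NormedSpace ℝ F] (c : ℝ) (u : B →L[ℝ] F) (L : B →L[ℝ] ℝ) (v : F) :
    ‖c • u + L.smulRight v‖ ≤ |c| * ‖u‖ + ‖L‖ * ‖v‖ := by
  refine (norm_add_le _ _).trans ?_
  rw [norm_smul, ContinuousLinearMap.norm_smulRight_apply, Real.norm_eq_abs]

theorem IsCb2.mul' {B : Type*} [NormedAddCommGroup B] [NormedSpace ℝ B] {f g : B → ℝ}
    (hf : IsCb2 f) (hg : IsCb2 g) : IsCb2 (fun x => f x * g x) := by
  obtain ⟨f0, ⟨a, ha⟩, ⟨a1, ha1⟩, ⟨a2, ha2⟩⟩ := hf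
  obtain ⟨g0, ⟨b, hb⟩, ⟨b1, hb1⟩, ⟨b2, hb2⟩⟩ := hg
  have fd : Differentiable ℝ f := f0.differentiable (by norm_num)
  have gd : Differentiable ℝ g := g0.differentiable (by norm_num)
  have fdd : Differentiable ℝ (fderiv ℝ f) :=
    (f0.fderiv_right (m := 1) (by norm_num)).differentiable (by norm_num)
  have gdd : Differentiable ℝ (fderiv ℝ g) :=
    (g0.fderiv_right (m := 1) (by norm_num)).differentiable (by norm_num)
  have e1 : fderiv ℝ (fun x => f x * g x) = fun x => f x • fderiv ℝ g x + g x • fderiv ℝ f x := by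
    funext x
    exact ((fd x).hasFDerivAt.mul (gd x).hasFDerivAt).fderiv
  have e2 : ∀ x, fderiv ℝ (fderiv ℝ (fun x => f x * g x)) x =
      (f x • fderiv ℝ (fderiv ℝ g) x + (fderiv ℝ f x).smulRight (fderiv ℝ g x)) +
      (g x • fderiv ℝ (fderiv ℝ f) x + (fderiv ℝ g x).smulRight (fderiv ℝ f x)) := by
    intro x
    rw [e1]
    exact (((fd x).hasFDerivAt.smul (gdd x).hasFDerivAt).add
      ((gd x).hasFDerivAt.smul (fdd x).hasFDerivAt)).fderiv
  have a0 : 0 ≤ a := (abs_nonneg _).trans (ha 0)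
  have b0 : 0 ≤ b := (abs_nonneg _).trans (hb 0)
  have a10 : 0 ≤ a1 := (norm_nonneg _).trans (ha1 0)
  have b10 : 0 ≤ b1 := (norm_nonneg _).trans (hb1 0)
  refine ⟨f0.mul g0, ⟨a * b, fun x => ?_⟩, ⟨a * b1 + b * a1, fun x => ?_⟩,
    ⟨(a * b2 + a1 * b1) + (b * a2 + b1 * a1), fun x => ?_⟩⟩
  · rw [abs_mul]
    exact mul_le_mul (ha x) (hb x) (abs_nonneg _) a0
  · rw [e1]
    refine (norm_add_le _ _).trans ?_
    rw [norm_smul, norm_smul, Real.norm_eq_abs, Real.norm_eq_abs]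
    exact add_le_add (mul_le_mul (ha x) (hb1 x) (norm_nonneg _) a0)
      (mul_le_mul (hb x) (ha1 x) (norm_nonneg _) b0)
  · rw [e2]
    refine (norm_add_le (E := B →L[ℝ] B →L[ℝ] ℝ) _ _).trans
      (add_le_add ((aux_norm _ _ _ _).trans ?_) ((aux_norm _ _ _ _).trans ?_))
    · exact add_le_add (mul_le_mul (ha x) (hb2 x) (norm_nonneg (E := B →L[ℝ] B →L[ℝ] ℝ) _) a0)
        (mul_le_mul (ha1 x) (hb1 x) (norm_nonneg _) a10)
    · exact add_le_add (mul_le_mul (hb x) (ha2 x) (norm_nonneg (E := B →L[ℝ] B →L[ℝ] ℝ) _) b0)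
        (mul_le_mul (hb1 x) (ha1 x) (norm_nonneg _) b10)

theorem IsCb2.const' {B : Type*} [NormedAddCommGroup B] [NormedSpace ℝ B] (c : ℝ) :
    IsCb2 (fun _ : B => c) := by
  have e : fderiv ℝ (fun _ : B => c) = fun _ => 0 := by funext x; simp
  refine ⟨contDiff_const, ⟨|c|, fun _ => le_rfl⟩, ⟨0, fun x => ?_⟩, ⟨0, fun x => ?_⟩⟩
  · simp
  · rw [e, fderiv_const_apply]
    exact (norm_zero (E := B →L[ℝ] B →L[ℝ] ℝ)).le

theorem IsCb2.add' {B : Type*} [NormedAddCommGroup B] [NormedSpace ℝ B] {f g : B → ℝ}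
    (hf : IsCb2 f) (hg : IsCb2 g) : IsCb2 (fun x => f x + g x) := by
  obtain ⟨f0, ⟨a, ha⟩, ⟨a1, ha1⟩, ⟨a2, ha2⟩⟩ := hf
  obtain ⟨g0, ⟨b, hb⟩, ⟨b1, hb1⟩, ⟨b2, hb2⟩⟩ := hg
  have fd : Differentiable ℝ f := f0.differentiable (by norm_num)
  have gd : Differentiable ℝ g := g0.differentiable (by norm_num)
  have fdd : Differentiable ℝ (fderiv ℝ f) :=
    (f0.fderiv_right (m := 1) (by norm_num)).differentiable (by norm_num)
  have gdd : Differentiable ℝ (fderiv ℝ g) :=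
    (g0.fderiv_right (m := 1) (by norm_num)).differentiable (by norm_num)
  have e1 : fderiv ℝ (fun x => f x + g x) = fun x => fderiv ℝ f x + fderiv ℝ g x := by
    funext x
    exact ((fd x).hasFDerivAt.add (gd x).hasFDerivAt).fderiv
  have e2 : ∀ x, fderiv ℝ (fderiv ℝ (fun x => f x + g x)) x =
      fderiv ℝ (fderiv ℝ f) x + fderiv ℝ (fderiv ℝ g) x := by
    intro x
    rw [e1]
    exact ((fdd x).hasFDerivAt.add (gdd x).hasFDerivAt).fderiv
  refine ⟨f0.add g0, ⟨a + b, fun x => ?_⟩, ⟨a1 + b1, fun x => ?_⟩, ⟨a2 + b2, fun x => ?_⟩⟩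
  · exact (abs_add_le _ _).trans (add_le_add (ha x) (hb x))
  · rw [e1]
    exact (norm_add_le _ _).trans (add_le_add (ha1 x) (hb1 x))
  · rw [e2]
    exact (norm_add_le (fderiv ℝ (fderiv ℝ f) x) (fderiv ℝ (fderiv ℝ g) x)).trans
      (add_le_add (ha2 x) (hb2 x))

theorem IsCb2.shift' {B : Type*} [NormedAddCommGroup B] [NormedSpace ℝ B] {f : B → ℝ}
    (hf : IsCb2 f) (v : B) : IsCb2 (fun x => f (x + v)) := by
  obtain ⟨f0, ⟨a, ha⟩, ⟨a1, ha1⟩, ⟨a2, ha2⟩⟩ := hf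
  have e1 : fderiv ℝ (fun x => f (x + v)) = fun x => fderiv ℝ f (x + v) := by
    funext x
    exact fderiv_comp_add_right v
  refine ⟨f0.comp (contDiff_id.add contDiff_const), ⟨a, fun x => ha _⟩, ⟨a1, fun x => ?_⟩,
    ⟨a2, fun x => ?_⟩⟩
  · rw [e1]; exact ha1 _
  · rw [e1, fderiv_comp_add_right v]; exact ha2 _

/-- difference quotient bound -/
theorem dq_bound {B : Type*} [NormedAddCommGroup B] [NormedSpace ℝ B] {h : B → ℝ} {C : ℝ}
    (hd : Differentiable ℝ h) (hC : ∀ x, ‖fderiv ℝ h x‖ ≤ C) (k x : B) {t : ℝ} (ht : t ≠ 0) :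
    |t⁻¹ * (h (x + t • k) - h x)| ≤ C * ‖k‖ := by
  have := Convex.norm_image_sub_le_of_norm_fderiv_le (𝕜 := ℝ) (f := h) (C := C) (s := Set.univ)
    (x := x) (y := x + t • k) (fun x _ => hd x) (fun x _ => hC x) convex_univ trivial trivial
  rw [add_sub_cancel_left, norm_smul, Real.norm_eq_abs, Real.norm_eq_abs] at this
  rw [abs_mul, abs_inv, inv_mul_le_iff₀ (abs_pos.2 ht)]
  linarith

theorem dq_tendsto {B : Type*} [NormedAddCommGroup B] [NormedSpace ℝ B] {h : B → ℝ}
    (hd : Differentiable ℝ h) (k x : B) :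
    Tendsto (fun n : ℕ => ((1 : ℝ) / (n + 1))⁻¹ * (h (x + ((1 : ℝ) / (n + 1)) • k) - h x)) atTop
      (nhds (fderiv ℝ h x k)) := by
  have h1 := ((hd x).hasFDerivAt.hasLineDerivAt k).tendsto_slope_zero
  have h2 : Tendsto (fun n : ℕ => (1 : ℝ) / (n + 1)) atTop (nhdsWithin 0 {0}ᶜ) := by
    refine tendsto_nhdsWithin_iff.2 ⟨tendsto_one_div_add_atTop_nhds_zero_nat, ?_⟩
    filter_upwards with n
    have : (1 : ℝ) / (n + 1) ≠ 0 := by positivity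
    simpa using this
  have := h1.comp h2
  simpa [Function.comp_def] using this

/-- The key identity in the proof of Proposition 1.1:
`ℰ_k(f,g) = (ℙ × μ)({f ∂_k g}(X^·) M_·) − μ(f ∂_k² g)`. -/
theorem form_identity_from_integration_by_parts
    {B : Type*} [NormedAddCommGroup B] [NormedSpace ℝ B] [CompleteSpace B]
    [TopologicalSpace.SeparableSpace B] [MeasurableSpace B] [BorelSpace B]
    {Ω : Type*} [MeasurableSpace Ω] (ℙ : Measure Ω) [IsProbabilityMeasure ℙ]
    (X : B × Ω → B) (hX : Measurable X)
    (μ : Measure B) [IsProbabilityMeasure μ]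
    -- invariance of `μ` for the Markov operator `P f (x) = E[f (X^x)]`
    (hinv : ∀ f : B → ℝ, Measurable f → (∃ c, ∀ x, |f x| ≤ c) →
      ∫ x, ∫ ω, f (X (x, ω)) ∂ℙ ∂μ = ∫ x, f x ∂μ)
    (k : B)
    (M : B × Ω → ℝ) (hM : Measurable M)
    -- `M ∈ L²(ℙ × μ)`
    (hM2 : Integrable (fun p => (M p) ^ 2) (μ.prod ℙ))
    -- integration by parts formula: `P (∂_k f) (x) = E[f (X^x) M_x]` for μ-a.e. `x`
    (hIBP : ∀ f : B → ℝ, IsCb2 f →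
      ∀ᵐ x ∂μ, ∫ ω, fderiv ℝ f (X (x, ω)) k ∂ℙ = ∫ ω, f (X (x, ω)) * M (x, ω) ∂ℙ)
    (f g : B → ℝ) (hf : IsCb2 f) (hg : IsCb2 g) :
    ∫ x, (fderiv ℝ f x k) * (fderiv ℝ g x k) ∂μ =
      (∫ x, ∫ ω, (f (X (x, ω)) * fderiv ℝ g (X (x, ω)) k) * M (x, ω) ∂ℙ ∂μ)
        - ∫ x, f x * fderiv ℝ (fun y => fderiv ℝ g y k) x k ∂μ := by
  have hf' := hf
  have hg' := hg
  obtain ⟨f0, ⟨a, ha⟩, ⟨a1, ha1⟩, -⟩ := hf'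
  obtain ⟨g0, ⟨b, hb⟩, ⟨b1, hb1⟩, ⟨b2, hb2⟩⟩ := hg'
  have a0 : 0 ≤ a := (abs_nonneg _).trans (ha 0)
  have a10 : 0 ≤ a1 := (norm_nonneg _).trans (ha1 0)
  have b10 : 0 ≤ b1 := (norm_nonneg _).trans (hb1 0)
  have b20 : 0 ≤ b2 := (norm_nonneg (fderiv ℝ (fderiv ℝ g) 0)).trans (hb2 0)
  have fd : Differentiable ℝ f := f0.differentiable (by norm_num)
  have gd : Differentiable ℝ g := g0.differentiable (by norm_num)
  have fc1 : ContDiff ℝ 1 (fderiv ℝ f) := f0.fderiv_right (by norm_num)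
  have gc1 : ContDiff ℝ 1 (fderiv ℝ g) := g0.fderiv_right (by norm_num)
  have gdd : Differentiable ℝ (fderiv ℝ g) := gc1.differentiable (by norm_num)
  set F : B → ℝ := fun y => fderiv ℝ f y k with hF
  set G : B → ℝ := fun y => fderiv ℝ g y k with hG
  have Fc : Continuous F := fc1.continuous.clm_apply continuous_const
  have Gc1 : ContDiff ℝ 1 G := gc1.clm_apply contDiff_const
  have Gd : Differentiable ℝ G := Gc1.differentiable (by norm_num)
  have Gc : Continuous G := Gd.continuous
  have G2c : Continuous fun x => fderiv ℝ G x k :=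
    (Gc1.continuous_fderiv (by norm_num)).clm_apply continuous_const
  have Fb : ∀ x, |F x| ≤ a1 * ‖k‖ := fun x =>
    ((fderiv ℝ f x).le_opNorm k).trans (mul_le_mul_of_nonneg_right (ha1 x) (norm_nonneg _))
  have Gb : ∀ x, |G x| ≤ b1 * ‖k‖ := fun x =>
    ((fderiv ℝ g x).le_opNorm k).trans (mul_le_mul_of_nonneg_right (hb1 x) (norm_nonneg _))
  have Gfb : ∀ x, ‖fderiv ℝ G x‖ ≤ b2 * ‖k‖ := by
    intro x
    have e : fderiv ℝ G x = (fderiv ℝ (fderiv ℝ g) x).flip k := by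
      have := ((gdd x).hasFDerivAt.clm_apply (hasFDerivAt_const k x)).fderiv
      rw [hG, this]; simp
    rw [e]
    refine ((fderiv ℝ (fderiv ℝ g) x).flip.le_opNorm k).trans ?_
    rw [ContinuousLinearMap.opNorm_flip]
    exact mul_le_mul_of_nonneg_right (hb2 x) (norm_nonneg _)
  have G2b : ∀ x, |fderiv ℝ G x k| ≤ b2 * ‖k‖ * ‖k‖ := fun x =>
    ((fderiv ℝ G x).le_opNorm k).trans (mul_le_mul_of_nonneg_right (Gfb x) (norm_nonneg _))
  -- difference quotients
  set t : ℕ → ℝ := fun n => (1 : ℝ) / (n + 1) with ht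
  have tne : ∀ n, t n ≠ 0 := fun n => by simp only [ht]; positivity
  set D : ℕ → B → ℝ := fun n x => (t n)⁻¹ * (g (x + t n • k) - g x) with hD
  set E : ℕ → B → ℝ := fun n x => (t n)⁻¹ * (G (x + t n • k) - G x) with hE
  have Db : ∀ n x, |D n x| ≤ b1 * ‖k‖ := fun n x => dq_bound gd hb1 k x (tne n)
  have Eb : ∀ n x, |E n x| ≤ b2 * ‖k‖ * ‖k‖ := fun n x => dq_bound Gd Gfb k x (tne n)
  have Dt : ∀ x, Tendsto (fun n => D n x) atTop (nhds (G x)) := fun x => dq_tendsto gd k x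
  have Et : ∀ x, Tendsto (fun n => E n x) atTop (nhds (fderiv ℝ G x k)) :=
    fun x => dq_tendsto Gd k x
  have gC := gd.continuous
  have fC := fd.continuous
  have Dc : ∀ n, Continuous (D n) := fun n => by simp only [hD]; fun_prop
  have Ec : ∀ n, Continuous (E n) := fun n => by simp only [hE]; fun_prop
  have hcb : ∀ n, IsCb2 (fun x => f x * D n x) := by
    intro n
    have := hf.mul' ((IsCb2.const' (t n)⁻¹).mul' ((hg.shift' (t n • k)).add'
      ((IsCb2.const' (-1)).mul' hg)))
    convert this using 3 with x
    simp only [hD]; ring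
  have hder : ∀ n x, fderiv ℝ (fun x => f x * D n x) x k = f x * E n x + D n x * F x := by
    intro n x
    have h1 : HasFDerivAt (fun x => g (x + t n • k)) (fderiv ℝ g (x + t n • k)) x := by
      have := (gd (x + t n • k)).hasFDerivAt
      exact (hasFDerivAt_comp_add_right (t n • k)).2 this
    have h2 := (fd x).hasFDerivAt.mul ((h1.sub (gd x).hasFDerivAt).const_mul (t n)⁻¹)
    have h3 : fderiv ℝ (fun x => f x * D n x) x = _ := h2.fderiv
    rw [h3]
    simp [hE, hF, hG, hD]
  have hMi : Integrable M (μ.prod ℙ) :=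
    ((memLp_two_iff_integrable_sq hM.aestronglyMeasurable).2 hM2).integrable (by norm_num)
  -- general facts
  have hprod : ∀ h : B → ℝ, Continuous h → (∃ c, ∀ x, |h x| ≤ c) →
      Integrable (fun p => h (X p) * M p) (μ.prod ℙ) := by
    rintro h hc ⟨c, hb⟩
    exact hMi.bdd_mul (c := c) (hc.measurable.comp hX).aestronglyMeasurable
      (Eventually.of_forall fun p => hb _)
  have key : ∀ n, ∫ x, (f x * E n x + D n x * F x) ∂μ =
      ∫ p, (f (X p) * D n (X p)) * M p ∂(μ.prod ℙ) := by
    intro n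
    have h1 := hcb n
    rw [integral_prod _ (hprod _ h1.1.continuous h1.2.1), ← integral_congr_ae (hIBP _ h1)]
    simp only [hder]
    refine (hinv (fun x => f x * E n x + D n x * F x)
      ((fC.mul (Ec n)).add ((Dc n).mul Fc)).measurable
      ⟨a * (b2 * ‖k‖ * ‖k‖) + b1 * ‖k‖ * (a1 * ‖k‖), fun x => ?_⟩).symm
    refine (abs_add_le _ _).trans ?_
    rw [abs_mul (f x), abs_mul (D n x)]
    exact add_le_add (mul_le_mul (ha x) (Eb n x) (abs_nonneg _) a0)
      (mul_le_mul (Db n x) (Fb x) (abs_nonneg _) (by positivity))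
  have lim1 : Tendsto (fun n => ∫ x, (f x * E n x + D n x * F x) ∂μ) atTop
      (nhds (∫ x, (f x * fderiv ℝ G x k + G x * F x) ∂μ)) := by
    refine tendsto_integral_of_dominated_convergence
      (fun _ => a * (b2 * ‖k‖ * ‖k‖) + b1 * ‖k‖ * (a1 * ‖k‖)) (fun n =>
      ((fC.mul (Ec n)).add ((Dc n).mul Fc)).measurable.aestronglyMeasurable)
      (integrable_const _) (fun n => Eventually.of_forall fun x => ?_)
      (Eventually.of_forall fun x => ((Et x).const_mul _).add ((Dt x).mul_const _))
    rw [Real.norm_eq_abs]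
    refine (abs_add_le _ _).trans ?_
    rw [abs_mul (f x), abs_mul (D n x)]
    exact add_le_add (mul_le_mul (ha x) (Eb n x) (abs_nonneg _) a0)
      (mul_le_mul (Db n x) (Fb x) (abs_nonneg _) (by positivity))
  have lim2 : Tendsto (fun n => ∫ p, (f (X p) * D n (X p)) * M p ∂(μ.prod ℙ)) atTop
      (nhds (∫ p, (f (X p) * G (X p)) * M p ∂(μ.prod ℙ))) := by
    refine tendsto_integral_of_dominated_convergence
      (fun p => a * (b1 * ‖k‖) * ‖M p‖) (fun n => (hprod (fun x => f x * D n x)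
        (hcb n).1.continuous (hcb n).2.1).aestronglyMeasurable)
      (hMi.norm.const_mul _) (fun n => Eventually.of_forall fun p => ?_)
      (Eventually.of_forall fun p => ((Dt _).const_mul _).mul_const _)
    rw [norm_mul, norm_mul]
    exact mul_le_mul_of_nonneg_right
      (mul_le_mul (ha _) (Db n _) (norm_nonneg _) a0) (norm_nonneg _)
  simp only [key] at lim1
  have fin := tendsto_nhds_unique lim1 lim2
  have i1 : Integrable (fun x => f x * fderiv ℝ G x k) μ :=
    Integrable.of_bound (fC.mul G2c).measurable.aestronglyMeasurable (a * (b2 * ‖k‖ * ‖k‖))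
      (Eventually.of_forall fun x => by
        rw [norm_mul]; exact mul_le_mul (ha x) (G2b x) (abs_nonneg _) a0)
  have i2 : Integrable (fun x => G x * F x) μ :=
    Integrable.of_bound (Gc.mul Fc).measurable.aestronglyMeasurable (b1 * ‖k‖ * (a1 * ‖k‖))
      (Eventually.of_forall fun x => by
        rw [norm_mul]; exact mul_le_mul (Gb x) (Fb x) (abs_nonneg _) (by positivity))
  rw [integral_add i1 i2, integral_prod _ (hprod (fun x => f x * G x) (fC.mul Gc)
    ⟨a * (b1 * ‖k‖), fun x => by
      rw [abs_mul]; exact mul_le_mul (ha x) (Gb x) (abs_nonneg _) a0⟩)] at fin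
  have comm : ∫ x, F x * G x ∂μ = ∫ x, G x * F x ∂μ := by simp only [mul_comm]
  change ∫ x, F x * G x ∂μ = (∫ x, ∫ ω, (f (X (x, ω)) * G (X (x, ω))) * M (x, ω) ∂ℙ ∂μ) - _
  rw [comm]
  linarith
end

section
/- Let B be a real separable Banach space, (Ω, 𝓕, ℙ) a probability space, and X : B × Ω → B jointly measurable; write X^x := X(x,·). Assume the probability measure μ on B is invariant for the Markov operator P f(x) := E[f(X^x)], i.e. ∫_B P f dμ = ∫_B f dμ for all bounded measurable f. Fix k ∈ B and suppose there is a jointly measurable family M : B × Ω → ℝ with ∫_B E[M_x²] μ(dx) < ∞ such that E[(∂_k f)(X^x)] = E[f(X^x) M_x] for every f ∈ C_b²(B) and μ-a.e. x ∈ B. Then the Fomin derivative estimate holds: for every f ∈ C_b²(B), |∫_B ∂_k f dμ|² ≤ (∫_B E[M_x²] μ(dx)) · ∫_B f² dμ. -/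
open MeasureTheory Filter

/-- The Fomin derivative estimate `|μ(∂_k f)|² ≤ (ℙ×μ)(|M_·|²) μ(f²)` implied by the
integration by parts formula. -/
theorem fomin_derivative_estimate_from_integration_by_parts
    {B : Type*} [NormedAddCommGroup B] [NormedSpace ℝ B] [CompleteSpace B]
    [TopologicalSpace.SeparableSpace B] [MeasurableSpace B] [BorelSpace B]
    {Ω : Type*} [MeasurableSpace Ω] (ℙ : Measure Ω) [IsProbabilityMeasure ℙ]
    (X : B × Ω → B) (hX : Measurable X)
    (μ : Measure B) [IsProbabilityMeasure μ]
    -- invariance of `μ` for the Markov operator `P f (x) = E[f (X^x)]`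
    (hinv : ∀ f : B → ℝ, Measurable f → (∃ c, ∀ x, |f x| ≤ c) →
      ∫ x, ∫ ω, f (X (x, ω)) ∂ℙ ∂μ = ∫ x, f x ∂μ)
    (k : B)
    (M : B × Ω → ℝ) (hM : Measurable M)
    -- `M ∈ L²(ℙ × μ)`
    (hM2 : Integrable (fun p => (M p) ^ 2) (μ.prod ℙ))
    -- integration by parts formula: `P (∂_k f) (x) = E[f (X^x) M_x]` for μ-a.e. `x`
    (hIBP : ∀ f : B → ℝ, IsCb2 f →
      ∀ᵐ x ∂μ, ∫ ω, fderiv ℝ f (X (x, ω)) k ∂ℙ = ∫ ω, f (X (x, ω)) * M (x, ω) ∂ℙ)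
    (f : B → ℝ) (hf : IsCb2 f) :
    |∫ x, fderiv ℝ f x k ∂μ| ^ 2 ≤
      (∫ x, ∫ ω, (M (x, ω)) ^ 2 ∂ℙ ∂μ) * ∫ x, (f x) ^ 2 ∂μ := by
  obtain ⟨hc, ⟨c, hfc⟩, ⟨c', hfc'⟩, -⟩ := id hf
  have hcont : Continuous fun x => fderiv ℝ f x k :=
    (hc.continuous_fderiv (by norm_num)).clm_apply continuous_const
  have hfm : Measurable f := hc.continuous.measurable
  have hfX : Measurable fun p => f (X p) := hfm.comp hX
  have hf2 : Integrable (fun p => f (X p) ^ 2) (μ.prod ℙ) := by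
    refine Integrable.of_bound (hfX.pow_const 2).aestronglyMeasurable (c ^ 2) ?_
    refine ae_of_all _ fun p => ?_
    rw [Real.norm_eq_abs, abs_pow]
    exact pow_le_pow_left₀ (abs_nonneg _) (hfc _) 2
  have hfM : Integrable (fun p => f (X p) * M p) (μ.prod ℙ) := by
    refine Integrable.mono' (hf2.add hM2) (hfX.mul hM).aestronglyMeasurable ?_
    refine ae_of_all _ fun p => ?_
    simp only [Pi.add_apply, Real.norm_eq_abs]
    rw [abs_le]
    constructor <;> nlinarith [sq_nonneg (f (X p) + M p), sq_nonneg (f (X p) - M p)]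
  have e1 : ∫ x, fderiv ℝ f x k ∂μ = ∫ p, f (X p) * M p ∂(μ.prod ℙ) := by
    rw [← hinv _ hcont.measurable ⟨c' * ‖k‖, fun x => ?_⟩, integral_congr_ae (hIBP f hf),
      integral_prod _ hfM]
    rw [← Real.norm_eq_abs]
    exact (ContinuousLinearMap.le_opNorm _ _).trans
      (mul_le_mul_of_nonneg_right (hfc' x) (norm_nonneg _))
  have e2 : ∫ x, (f x) ^ 2 ∂μ = ∫ p, f (X p) ^ 2 ∂(μ.prod ℙ) := by
    rw [integral_prod _ hf2, hinv (fun x => f x ^ 2) (hfm.pow_const 2) ⟨c ^ 2, fun x => ?_⟩]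
    rw [abs_pow]
    exact pow_le_pow_left₀ (abs_nonneg _) (hfc _) 2
  have e3 : ∫ x, ∫ ω, (M (x, ω)) ^ 2 ∂ℙ ∂μ = ∫ p, M p ^ 2 ∂(μ.prod ℙ) :=
    (integral_prod _ hM2).symm
  rw [e1, e2, e3, sq_abs]
  have key : ∀ t : ℝ, 0 ≤ (∫ p, M p ^ 2 ∂(μ.prod ℙ)) * (t * t)
      + (2 * ∫ p, f (X p) * M p ∂(μ.prod ℙ)) * t + ∫ p, f (X p) ^ 2 ∂(μ.prod ℙ) := by
    intro t
    have h0 : 0 ≤ ∫ p, (M p ^ 2 * (t * t) + f (X p) * M p * (2 * t) + f (X p) ^ 2)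
        ∂(μ.prod ℙ) :=
      integral_nonneg fun p => by
        show (0 : ℝ) ≤ _
        nlinarith [sq_nonneg (t * M p + f (X p))]
    have hs : Integrable (fun p => M p ^ 2 * (t * t) + f (X p) * M p * (2 * t)) (μ.prod ℙ) :=
      (hM2.mul_const _).add (hfM.mul_const _)
    rw [integral_add hs hf2,
      integral_add (hM2.mul_const _) (hfM.mul_const _), integral_mul_const,
      integral_mul_const] at h0
    linarith
  have := discrim_le_zero key
  unfold discrim at this
  nlinarith
end

section
/- Let H and E be real Banach spaces, k ∈ H, L ≥ 0, and let b : H → E satisfy ‖b(y + s k) − b(y)‖ ≤ L|s| for all y ∈ H and s ∈ ℝ. For ε > 0 define the Gaussian mollification along k: b_ε(x) := ∫_ℝ b(x + r k) (2πε)^{−1/2} e^{−r²/(2ε)} dr (a Bochner integral, which is well defined since r ↦ b(x + r k) is continuous with at most linear growth). Then for every x ∈ H and every ε > 0, the line derivative of b_ε at x along k exists, i.e. the limit ∂_k b_ε(x) := lim_{s→0} (b_ε(x + s k) − b_ε(x))/s exists in E, and ‖∂_k b_ε(x)‖ ≤ L. -/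
open Real MeasureTheory

lemma aux_int (a : ℝ) (ha : 0 < a) :
    Integrable (fun r : ℝ => (1 + r ^ 2) * Real.exp (-a * r ^ 2)) := by
  have h1 := integrable_exp_neg_mul_sq ha
  have h2 := integrable_rpow_mul_exp_neg_mul_sq ha (s := 2) (by norm_num)
  refine (h1.add h2).congr (Filter.Eventually.of_forall fun r => ?_)
  simp only [Pi.add_apply, Real.rpow_two]
  ring

lemma aux_one (ε : ℝ) (hε : 0 < ε) :
    ∫ r : ℝ, (2 * Real.pi * ε) ^ (-(1:ℝ)/2) * Real.exp (-(r ^ 2) / (2 * ε)) = 1 := by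
  have h2 : (2 * Real.pi * ε) ^ (-(1:ℝ)/2) = (√(2 * π * ε))⁻¹ := by
    rw [Real.sqrt_eq_rpow, ← Real.rpow_neg (by positivity)]
    norm_num
  lift ε to NNReal using hε.le
  have h := ProbabilityTheory.integral_gaussianPDFReal_eq_one 0 (v := ε)
    (by rintro rfl; simp at hε)
  rw [h2]
  simpa only [ProbabilityTheory.gaussianPDFReal_def, sub_zero] using h

lemma aux_main {E : Type*} [NormedAddCommGroup E] [NormedSpace ℝ E]
    (L : ℝ) (hL : 0 ≤ L) (g : ℝ → E) (hg : ∀ s t, ‖g (s + t) - g s‖ ≤ L * |t|)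
    (ε : ℝ) (hε : 0 < ε) (w : ℝ → ℝ) (c : ℝ) (hc : 0 < c)
    (hw : w = fun r => c * Real.exp (-(r ^ 2) / (2 * ε))) (hw1 : ∫ r, w r = 1) :
    ∃ D : E, HasDerivAt (fun t => ∫ r, w r • g (t + r)) D 0 ∧ ‖D‖ ≤ L := by
  have gcont : Continuous g := by
    have : LipschitzWith ⟨L, hL⟩ g := LipschitzWith.of_dist_le_mul fun s t => by
      have := hg t (s - t)
      rw [add_sub_cancel] at this
      rw [dist_eq_norm, Real.dist_eq]; exact this
    exact this.continuous
  have wcont : Continuous w := by rw [hw]; fun_prop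
  have wpos : ∀ r, 0 ≤ w r := fun r => by rw [hw]; positivity
  have growth : ∀ r, ‖g r‖ ≤ (‖g 0‖ + L) * (1 + |r|) := fun r => by
    have h1 := hg 0 r
    rw [zero_add] at h1
    have h2 := norm_sub_norm_le (g r) (g 0)
    nlinarith [norm_nonneg (g 0), abs_nonneg r, mul_nonneg (norm_nonneg (g 0)) (abs_nonneg r)]
  set M := ‖g 0‖ + L with hM
  have M0 : 0 ≤ M := by positivity
  -- weight bound for |t| ≤ 1
  have wb : ∀ t r : ℝ, |t| ≤ 1 →
      w (r - t) ≤ c * Real.exp (1 / (2 * ε)) * Real.exp (-(1 / (4 * ε)) * r ^ 2) := fun t r ht => by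
    rw [hw, mul_assoc, ← Real.exp_add]
    have ht2 : t ^ 2 ≤ 1 := by rw [← sq_abs]; nlinarith [abs_nonneg t]
    have : -((r - t) ^ 2) / (2 * ε) ≤ 1 / (2 * ε) + -(1 / (4 * ε)) * r ^ 2 := by
      have e : 1 / (2 * ε) + -(1 / (4 * ε)) * r ^ 2 = (1 - r ^ 2 / 2) / (2 * ε) := by
        field_simp; ring
      rw [e]
      gcongr
      nlinarith [sq_nonneg (r - 2 * t)]
    show c * _ ≤ _
    gcongr
  have ha : 0 < 1 / (4 * ε) := by positivity
  set K := c * Real.exp (1 / (2 * ε)) with hK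
  have K0 : 0 < K := by positivity
  have I0 := aux_int _ ha
  have Iw : Integrable w := by
    by_contra h
    rw [integral_undef h] at hw1
    exact zero_ne_one hw1
  have dom : ∀ t r : ℝ, |t| ≤ 1 → w (r - t) * ((1 + |r|) * (1 + |r|)) ≤
      2 * K * ((1 + r ^ 2) * Real.exp (-(1 / (4 * ε)) * r ^ 2)) := fun t r ht => by
    have h1 := wb t r ht
    have h2 : (1 + |r|) * (1 + |r|) ≤ 2 * (1 + r ^ 2) := by
      rw [← sq_abs r]; nlinarith [sq_nonneg (|r| - 1)]
    calc _ ≤ (K * Real.exp (-(1 / (4 * ε)) * r ^ 2)) * (2 * (1 + r ^ 2)) := by gcongr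
      _ = _ := by ring
  -- integrability of shifted
  have Is : ∀ t : ℝ, |t| ≤ 1 → Integrable (fun r => w (r - t) • g r) := fun t ht => by
    refine Integrable.mono' (I0.const_mul (M * (2 * K)))
      (by fun_prop) (Filter.Eventually.of_forall fun r => ?_)
    rw [norm_smul, Real.norm_of_nonneg (wpos _)]
    have h1 := dom t r ht
    have h2 := growth r
    have h3 : ‖g r‖ ≤ M * ((1 + |r|) * (1 + |r|)) := by
      refine h2.trans ?_
      have : 0 ≤ |r| := abs_nonneg r
      gcongr
      nlinarith
    calc w (r - t) * ‖g r‖ ≤ w (r - t) * (M * ((1 + |r|) * (1 + |r|))) :=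
          mul_le_mul_of_nonneg_left h3 (wpos _)
      _ = M * (w (r - t) * ((1 + |r|) * (1 + |r|))) := by ring
      _ ≤ M * (2 * K * ((1 + r ^ 2) * Real.exp (-(1 / (4 * ε)) * r ^ 2))) := by gcongr
      _ = _ := by ring
  have shift : ∀ t : ℝ, ∫ r, w r • g (t + r) = ∫ r, w (r - t) • g r := fun t => by
    rw [← integral_add_right_eq_self (fun r => w (r - t) • g r) t]
    simp [add_comm]
  have Is' : ∀ t : ℝ, |t| ≤ 1 → Integrable (fun r => w r • g (t + r)) := fun t ht => by
    have := (Is t ht).comp_add_right t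
    simpa [add_comm] using this
  have key := hasDerivAt_integral_of_dominated_loc_of_deriv_le (𝕜 := ℝ) (μ := volume)
    (F := fun t r => w (r - t) • g r) (x₀ := (0:ℝ)) (s := Metric.ball 0 1)
    (F' := fun t r => (w (r - t) * ((r - t) / ε)) • g r)
    (bound := fun r => (M / ε * (2 * K)) * ((1 + r ^ 2) * Real.exp (-(1 / (4 * ε)) * r ^ 2)))
    (Metric.ball_mem_nhds _ one_pos)
    (Filter.Eventually.of_forall fun t => by fun_prop)
    (Is 0 (by simp))
    (by fun_prop)
    (Filter.Eventually.of_forall fun r t ht => by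
      have ht' : |t| ≤ 1 := by
        rw [mem_ball_zero_iff, Real.norm_eq_abs] at ht; exact ht.le
      have h4 : |r - t| ≤ 1 + |r| := by
        have := abs_sub r t; linarith
      rw [norm_smul, norm_mul, Real.norm_of_nonneg (wpos _), Real.norm_eq_abs, abs_div,
        abs_of_pos hε]
      have hw0 := wpos (r - t)
      calc w (r - t) * (|r - t| / ε) * ‖g r‖
          ≤ w (r - t) * ((1 + |r|) / ε) * (M * (1 + |r|)) := by
            gcongr
            exact growth r
        _ = M / ε * (w (r - t) * ((1 + |r|) * (1 + |r|))) := by ring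
        _ ≤ M / ε * (2 * K * ((1 + r ^ 2) * Real.exp (-(1 / (4 * ε)) * r ^ 2))) :=
            mul_le_mul_of_nonneg_left (dom t r ht') (by positivity)
        _ = _ := by ring)
    (I0.const_mul _)
    (Filter.Eventually.of_forall fun r t _ => by
      refine HasDerivAt.smul_const ?_ (g r)
      rw [hw]
      have h := (((((hasDerivAt_id t).const_sub r).pow 2).neg.div_const (2 * ε)).exp).const_mul c
      refine h.congr_deriv ?_
      simp only [Pi.neg_apply, Pi.pow_apply, id]
      norm_num
      field_simp)
  have hd : HasDerivAt (fun t => ∫ r, w r • g (t + r))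
      (∫ r, (w (r - 0) * ((r - 0) / ε)) • g r) 0 := by
    simp_rw [shift]
    exact key.2
  refine ⟨_, hd, ?_⟩
  refine hd.le_of_lip' hL ?_
  filter_upwards [Metric.ball_mem_nhds (0:ℝ) one_pos] with t ht
  have ht' : |t| ≤ 1 := by
    rw [mem_ball_zero_iff, Real.norm_eq_abs] at ht; exact ht.le
  rw [← integral_sub (Is' t ht') (Is' 0 (by simp))]
  calc _ ≤ ∫ r, w r * (L * |t|) := by
        refine norm_integral_le_of_norm_le (Iw.mul_const _) (Filter.Eventually.of_forall fun r => ?_)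
        rw [← smul_sub, norm_smul, Real.norm_of_nonneg (wpos _), zero_add, add_comm t r]
        exact mul_le_mul_of_nonneg_left (hg r t) (wpos r)
    _ = L * ‖t - 0‖ := by rw [integral_mul_const, hw1, one_mul, sub_zero, Real.norm_eq_abs]

/-- The Gaussian mollification `b_ε` along `k` of a map `b` that is Lipschitz along `k`
has a line derivative along `k` at every point, bounded by the Lipschitz constant `L`. -/
theorem gaussian_mollification_line_differentiable
    {H E : Type*} [NormedAddCommGroup H] [NormedSpace ℝ H]
    [NormedAddCommGroup E] [NormedSpace ℝ E] [CompleteSpace E]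
    (k : H) (L : ℝ) (hL : 0 ≤ L) (b : H → E)
    (hb : ∀ (y : H) (s : ℝ), ‖b (y + s • k) - b y‖ ≤ L * |s|)
    (ε : ℝ) (hε : 0 < ε) (x : H) :
    ∃ D : E,
      HasLineDerivAt ℝ
        (fun z => ∫ r : ℝ,
          ((2 * Real.pi * ε) ^ (-(1:ℝ)/2) * Real.exp (-(r ^ 2) / (2 * ε))) • b (z + r • k))
        D x k ∧
      ‖D‖ ≤ L := by
  obtain ⟨D, h1, h2⟩ := aux_main L hL (fun r => b (x + r • k))
    (fun s t => by
      have := hb (x + s • k) t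
      rwa [add_assoc, ← add_smul] at this)
    ε hε _ ((2 * Real.pi * ε) ^ (-(1:ℝ)/2)) (by positivity) rfl (aux_one ε hε)
  refine ⟨D, ?_, h2⟩
  unfold HasLineDerivAt
  simpa only [add_smul, add_assoc] using h1
end
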